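/- α(C₇^{⊠5}) ≥ 367: there exists a set S ⊆ (ℤ/7ℤ)⁵ of cardinality 367 such that for all distinct u, v ∈ S there is a coordinate i with δ(u_i, v_i) ≥ 2 (i.e., S is independent in C₇^{⊠5}, where C₇ = C_{2,7} is the 7-cycle). Consequently, the Shannon capacity satisfies Θ(C₇) ≥ 367^{1/5}. -/

import Mathlib

/-- The circular (Lee) distance on `ℤ/qℤ`: `δ(x,y) = min(|x-y|, q-|x-y|)`,
with representatives taken in `{0,…,q-1}`. -/
def circDist (q : ℕ) (x y : ZMod q) : ℕ := min (x - y).val (y - x).val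

/-- `α(C_{d,q}^{⊠n})`: the maximum cardinality of a set `S ⊆ (ℤ/qℤ)ⁿ` such that any
two distinct elements of `S` differ by at least `d` in circular distance in some
coordinate. -/
noncomputable def circAlpha (q d n : ℕ) : ℕ :=
  sSup {k : ℕ | ∃ S : Finset (Fin n → ZMod q),
    (∀ u ∈ S, ∀ v ∈ S, u ≠ v → ∃ i : Fin n, d ≤ circDist q (u i) (v i)) ∧ S.card = k}

/-- The Shannon capacity `Θ(C_{d,q}) = sup_{n ≥ 1} α(C_{d,q}^{⊠n})^{1/n}`. -/
noncomputable def circTheta (q d : ℕ) : ℝ :=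
  ⨆ n : ℕ, (circAlpha q d (n + 1) : ℝ) ^ (((n : ℝ) + 1)⁻¹)

/-!
The construction is that of Polak and Schrijver. The set `{t • (1, 7, 7², 7³, 7⁴) | t ∈ ℤ/382ℤ}` is
independent in the fifth strong power of `C_{108,382}`, and `382/108` is only slightly larger than
`7/2`. The floor map `x ↦ ⌊2x/109⌋` from `ℤ/382ℤ` to `ℤ/7ℤ` sends letters at circular distance at
least `110` to letters at circular distance at least `2`, so two rounded points can clash only if
they differ by one of the few multiples of `(1, 7, 7², 7³, 7⁴)` all of whose coordinates are within
`109` of `0`. After a suitable translation, the rounded points involved in no clash are `327` in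
number, and `40` further words are separated from them and from each other.
-/

section CircDist

variable {q : ℕ}

theorem circDist_self (x : ZMod q) : circDist q x x = 0 := by
  simp [circDist]

theorem circDist_comm (x y : ZMod q) : circDist q x y = circDist q y x :=
  min_comm _ _

theorem circDist_natCast {x y : ℕ} (h : Nat.dist x y < q) :
    circDist q x y = min (Nat.dist x y) (q - Nat.dist x y) := by
  wlog hyx : y ≤ x generalizing x y
  · rw [circDist_comm, Nat.dist_comm]
    exact this (by rwa [Nat.dist_comm]) (by omega)
  have : NeZero q := ⟨by omega⟩
  obtain ⟨r, rfl⟩ := Nat.exists_eq_add_of_le hyx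
  rw [Nat.dist_eq_sub_of_le_right hyx, Nat.add_sub_cancel_left] at h ⊢
  have hr : (r : ZMod q).val = r := ZMod.val_cast_of_lt h
  rcases eq_or_ne r 0 with rfl | hr0
  · simp [circDist]
  · have hne : (r : ZMod q) ≠ 0 := fun h ↦ hr0 (by rw [← hr, h, ZMod.val_zero])
    simp [circDist, ZMod.neg_val, hne, hr]

end CircDist

section FarApart

/-- For `d ≥ 1`, natural number representatives less than `q` apart satisfy this exactly when their
residues modulo `q` have circular distance at least `d`. Phrasing this on representatives lets
concrete instances be evaluated by natural number arithmetic. -/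
def FarApart (q d x y : ℕ) : Prop :=
  d ≤ Nat.dist x y ∧ Nat.dist x y + d ≤ q

variable {q d x y : ℕ}

theorem FarApart.symm (h : FarApart q d x y) : FarApart q d y x := by
  rwa [FarApart, Nat.dist_comm]

theorem FarApart.le_circDist (h : FarApart q d x y) : d ≤ circDist q x y := by
  obtain ⟨hlow, hup⟩ := h
  rcases d.eq_zero_or_pos with rfl | hd
  · exact Nat.zero_le _
  · rw [circDist_natCast (by omega)]
    omega

theorem FarApart.mod_add_mod {m : ℕ} (h : FarApart q d 0 (m % q)) (x : ℕ) :
    FarApart q d (x % q) ((x + m) % q) := by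
  rcases q.eq_zero_or_pos with rfl | hq
  · simp only [FarApart, Nat.dist, Nat.mod_zero] at h ⊢
    omega
  have hx := x.mod_lt hq
  have hm := m.mod_lt hq
  rw [Nat.add_mod]
  simp only [FarApart, Nat.dist] at h ⊢
  rcases lt_or_ge (x % q + m % q) q with hlt | hge
  · rw [Nat.mod_eq_of_lt hlt]
    omega
  · rw [Nat.mod_eq_sub_mod hge, Nat.mod_eq_of_lt (show x % q + m % q - q < q by omega)]
    omega

theorem FarApart.floor {a b p k : ℕ} (hb : 0 < b) (hlow : d * b ≤ a * k)
    (hup : a * q + d * b ≤ p * b + a * k) (h : FarApart q k x y) :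
    FarApart p d (a * x / b) (a * y / b) := by
  wlog hyx : y ≤ x generalizing x y
  · exact (this h.symm (by omega)).symm
  rw [FarApart, Nat.dist_eq_sub_of_le_right hyx] at h
  have hfloor_low : a * y / b + d ≤ a * x / b := by
    rw [← Nat.add_mul_div_right _ _ hb]
    refine Nat.div_le_div_right ?_
    have : a * (y + k) ≤ a * x := by gcongr; omega
    linarith
  have hfloor_up : a * x / b + d ≤ a * y / b + p := by
    rw [← Nat.add_mul_div_right _ _ hb, ← Nat.add_mul_div_right _ _ hb]
    refine Nat.div_le_div_right ?_
    have : a * (x + k) ≤ a * (y + q) := by gcongr 1; omega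
    linarith
  rw [FarApart, Nat.dist_eq_sub_of_le_right (by omega)]
  omega

end FarApart

section Independence

variable {ι : Type*} {q d n : ℕ}

/-- Two words over `ℤ/qℤ` are separated if some coordinate has circular distance at least `d`; for
`d ≥ 1` this means that they are distinct and non-adjacent in the strong power of `C_{d,q}`. -/
def CircSeparated (d : ℕ) (u v : ι → ZMod q) : Prop :=
  ∃ i, d ≤ circDist q (u i) (v i)

/-- Independent sets of the strong power of `C_{d,q}` with coordinates indexed by `ι`. -/
def IsCircIndependent (d : ℕ) (S : Set (ι → ZMod q)) : Prop :=
  S.Pairwise (CircSeparated d)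

instance : Std.Symm (CircSeparated d : (ι → ZMod q) → (ι → ZMod q) → Prop) where
  symm _ _ h := h.imp fun _ hi ↦ hi.trans_eq (circDist_comm _ _)

theorem CircSeparated.ne (hd : 0 < d) {u v : ι → ZMod q} (h : CircSeparated d u v) : u ≠ v := by
  rintro rfl
  obtain ⟨i, hi⟩ := h
  rw [circDist_self] at hi
  omega

theorem card_toFinset_of_pairwise_circSeparated (hd : 0 < d) {l : List (Fin n → ZMod q)}
    (hl : l.Pairwise (CircSeparated d)) : l.toFinset.card = l.length :=
  List.toFinset_card_of_nodup (hl.imp fun h ↦ h.ne hd)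

theorem isCircIndependent_of_pairwise_circSeparated {l : List (ι → ZMod q)}
    (hl : l.Pairwise (CircSeparated d)) : IsCircIndependent d {u | u ∈ l} :=
  fun _ hu _ hv huv ↦ hl.forall hu hv huv

/-- The counterpart of `CircSeparated` for words given by natural number representatives. -/
def DigitSeparated (q d : ℕ) (x y : ι → ℕ) : Prop :=
  ∃ i, FarApart q d (x i) (y i)

-- Evaluating a boolean is several times faster in the kernel than unfolding the instance for `∃ i`.
instance (x y : Fin n → ℕ) : Decidable (DigitSeparated q d x y) :=
  decidable_of_iff
    ((List.finRange n).any fun i ↦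
      Nat.ble d (Nat.dist (x i) (y i)) && Nat.ble (Nat.dist (x i) (y i) + d) q)
    (by simp [DigitSeparated, FarApart])

theorem DigitSeparated.circSeparated {x y : ι → ℕ} (h : DigitSeparated q d x y) :
    CircSeparated d (fun i ↦ (x i : ZMod q)) (fun i ↦ (y i : ZMod q)) :=
  h.imp fun _ ↦ FarApart.le_circDist

end Independence

section Capacity

variable {q d n : ℕ} [NeZero q]

theorem card_words_le_pow (S : Finset (Fin n → ZMod q)) : S.card ≤ q ^ n := by
  simpa using S.card_le_univ

theorem IsCircIndependent.card_le_circAlpha {S : Finset (Fin n → ZMod q)}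
    (hS : IsCircIndependent d (S : Set (Fin n → ZMod q))) : S.card ≤ circAlpha q d n := by
  refine le_csSup ⟨q ^ n, ?_⟩ ⟨S, fun u hu v hv huv ↦ hS hu hv huv, rfl⟩
  rintro _ ⟨T, -, rfl⟩
  exact card_words_le_pow T

theorem circAlpha_le_pow : circAlpha q d n ≤ q ^ n := by
  refine csSup_le ⟨0, ∅, by simp⟩ ?_
  rintro _ ⟨T, -, rfl⟩
  exact card_words_le_pow T

theorem circAlpha_rpow_inv_le (hn : n ≠ 0) : (circAlpha q d n : ℝ) ^ (n : ℝ)⁻¹ ≤ q := by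
  have hpow : (circAlpha q d n : ℝ) ≤ (q : ℝ) ^ n := mod_cast circAlpha_le_pow
  calc (circAlpha q d n : ℝ) ^ (n : ℝ)⁻¹ ≤ ((q : ℝ) ^ n) ^ (n : ℝ)⁻¹ := by gcongr
    _ = q := Real.pow_rpow_inv_natCast q.cast_nonneg hn

theorem circAlpha_rpow_inv_le_circTheta (hn : n ≠ 0) :
    (circAlpha q d n : ℝ) ^ (n : ℝ)⁻¹ ≤ circTheta q d := by
  obtain ⟨m, rfl⟩ := Nat.exists_eq_add_one_of_ne_zero hn
  have hbdd : BddAbove (Set.range fun m : ℕ ↦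
      (circAlpha q d (m + 1) : ℝ) ^ ((m : ℝ) + 1)⁻¹) := by
    refine ⟨q, ?_⟩
    rintro _ ⟨m, rfl⟩
    exact_mod_cast circAlpha_rpow_inv_le (q := q) (d := d) m.succ_ne_zero
  simpa only [Nat.cast_add_one, circTheta] using le_ciSup hbdd m

theorem IsCircIndependent.card_rpow_inv_le_circTheta {S : Finset (Fin n → ZMod q)}
    (hS : IsCircIndependent d (S : Set (Fin n → ZMod q))) (hn : n ≠ 0) :
    (S.card : ℝ) ^ (n : ℝ)⁻¹ ≤ circTheta q d :=
  calc (S.card : ℝ) ^ (n : ℝ)⁻¹ ≤ (circAlpha q d n : ℝ) ^ (n : ℝ)⁻¹ := by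
        gcongr
        exact hS.card_le_circAlpha
    _ ≤ circTheta q d := circAlpha_rpow_inv_le_circTheta hn

end Capacity

section Construction

/-- The word obtained from the lattice point `t • (1, 7, 7², 7³, 7⁴)` of `(ℤ/382ℤ)⁵` by translating
by `(40, 123, 40, 123, 40)` and rounding with `x ↦ ⌊2x/109⌋`. -/
def roundedWord (t : ℕ) : Fin 5 → ℕ :=
  fun i ↦ 2 * ((t * 7 ^ (i : ℕ) + ![40, 123, 40, 123, 40] i) % 382) / 109

/-- The nonzero `s` modulo `382` for which all coordinates of `s • (1, 7, 7², 7³, 7⁴)` are within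
circular distance `109` of `0`: the orbits of `1` and `8` under multiplication by `7`. -/
def shortSteps : List ℕ :=
  [1, 7, 8, 10, 39, 49, 56, 70, 108, 109, 273, 274, 312, 326, 333, 343, 372, 374, 375, 381]

/-- A parameter is isolated if its rounded word clashes with no other rounded word. Only clashes
along short steps have to be excluded, by `digitSeparated_roundedWord_of_lt`. -/
def IsIsolated (t : ℕ) : Prop :=
  ∀ s ∈ shortSteps, DigitSeparated 7 2 (roundedWord t) (roundedWord (t + s))

instance : DecidablePred IsIsolated := fun t ↦
  inferInstanceAs <| Decidable <|
    ∀ s ∈ shortSteps, DigitSeparated 7 2 (roundedWord t) (roundedWord (t + s))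

/-- The isolated parameters modulo `382`. -/
def isolatedParams : List ℕ :=
  (List.range 382).filter IsIsolated

/-- Further words, found by computer search, that fit between the rounded words of the isolated
parameters. -/
def extraWords : List (Fin 5 → ℕ) :=
  [![0, 0, 5, 2, 1], ![0, 1, 0, 0, 5], ![0, 2, 5, 3, 3], ![0, 3, 5, 6, 5], ![0, 4, 0, 5, 2],
   ![0, 4, 3, 6, 5], ![0, 4, 6, 2, 4], ![0, 4, 6, 6, 0], ![0, 5, 0, 4, 6], ![0, 5, 2, 2, 5],
   ![1, 0, 5, 3, 4], ![1, 4, 2, 4, 6], ![1, 5, 4, 3, 5], ![2, 2, 5, 2, 4], ![2, 4, 6, 1, 5],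
   ![2, 4, 6, 5, 1], ![3, 2, 0, 4, 6], ![3, 4, 0, 3, 5], ![3, 4, 0, 4, 3], ![3, 6, 5, 2, 5],
   ![4, 0, 0, 4, 0], ![4, 1, 2, 4, 6], ![4, 2, 5, 3, 0], ![4, 3, 5, 1, 4], ![4, 5, 6, 4, 1],
   ![5, 0, 5, 3, 1], ![5, 1, 4, 5, 6], ![5, 2, 4, 0, 0], ![5, 2, 5, 6, 3], ![5, 3, 0, 5, 0],
   ![5, 3, 1, 4, 2], ![5, 3, 3, 2, 0], ![5, 3, 4, 1, 2], ![5, 6, 3, 4, 0], ![6, 1, 5, 0, 5],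
   ![6, 2, 4, 2, 5], ![6, 4, 1, 5, 4], ![6, 4, 2, 4, 6], ![6, 5, 1, 0, 5], ![6, 6, 0, 2, 5]]

/-- The words of the independent set, by their digits. -/
def c7Words : List (Fin 5 → ℕ) :=
  isolatedParams.map roundedWord ++ extraWords

/-- The independent set of the fifth strong power of the `7`-cycle. -/
def c7Code : Finset (Fin 5 → ZMod 7) :=
  (c7Words.map fun x i ↦ (x i : ZMod 7)).toFinset

theorem digitSeparated_of_notMem_shortSteps :
    ∀ s < 382, s ≠ 0 → s ∉ shortSteps →
      DigitSeparated 382 110 (fun _ : Fin 5 ↦ 0) (fun i ↦ s * 7 ^ (i : ℕ) % 382) := by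
  decide +kernel

theorem digitSeparated_roundedWord_add {s : ℕ}
    (hs : DigitSeparated 382 110 (fun _ : Fin 5 ↦ 0) (fun i ↦ s * 7 ^ (i : ℕ) % 382)) (t : ℕ) :
    DigitSeparated 7 2 (roundedWord t) (roundedWord (t + s)) := by
  obtain ⟨i, hi⟩ := hs
  refine ⟨i, FarApart.floor (q := 382) (k := 110) (by norm_num) (by norm_num) (by norm_num) ?_⟩
  rw [add_mul, add_right_comm]
  exact hi.mod_add_mod _

theorem digitSeparated_roundedWord_of_lt {t t' : ℕ} (ht : IsIsolated t) (hlt : t < t')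
    (ht' : t' < 382) : DigitSeparated 7 2 (roundedWord t) (roundedWord t') := by
  obtain ⟨s, rfl⟩ := Nat.exists_eq_add_of_le hlt.le
  by_cases hs : s ∈ shortSteps
  · exact ht s hs
  · exact digitSeparated_roundedWord_add
      (digitSeparated_of_notMem_shortSteps s (by omega) (by omega) hs) t

theorem mem_isolatedParams {t : ℕ} : t ∈ isolatedParams ↔ t < 382 ∧ IsIsolated t := by
  rw [isolatedParams, List.mem_filter, List.mem_range, decide_eq_true_iff]

theorem pairwise_isolatedParams :
    isolatedParams.Pairwise fun t t' ↦ DigitSeparated 7 2 (roundedWord t) (roundedWord t') := by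
  refine (List.pairwise_lt_range.filter _).imp_of_mem fun {t t'} ht ht' hlt ↦ ?_
  obtain ⟨-, hiso⟩ := mem_isolatedParams.1 ht
  exact digitSeparated_roundedWord_of_lt hiso hlt (mem_isolatedParams.1 ht').1

theorem length_isolatedParams : isolatedParams.length = 327 := by
  decide +kernel

theorem pairwise_extraWords : extraWords.Pairwise (DigitSeparated 7 2) := by
  decide +kernel

theorem digitSeparated_roundedWord_extraWords :
    ∀ t ∈ isolatedParams, ∀ v ∈ extraWords, DigitSeparated 7 2 (roundedWord t) v := by
  have h : ∀ t < 382,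
      (∀ v ∈ extraWords, DigitSeparated 7 2 (roundedWord t) v) ∨ ¬ IsIsolated t := by
    decide +kernel
  intro t ht
  obtain ⟨hlt, hiso⟩ := mem_isolatedParams.1 ht
  exact (h t hlt).resolve_right (not_not_intro hiso)

theorem pairwise_c7Words : c7Words.Pairwise (DigitSeparated 7 2) := by
  rw [c7Words, List.pairwise_append, List.pairwise_map]
  refine ⟨pairwise_isolatedParams, pairwise_extraWords, ?_⟩
  rw [List.forall_mem_map]
  exact digitSeparated_roundedWord_extraWords

theorem length_c7Words : c7Words.length = 367 := by
  rw [c7Words, List.length_append, List.length_map, length_isolatedParams]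
  rfl

theorem pairwise_map_c7Words :
    (c7Words.map fun x i ↦ (x i : ZMod 7)).Pairwise (CircSeparated 2) :=
  pairwise_c7Words.map _ fun _ _ ↦ DigitSeparated.circSeparated

theorem card_c7Code : c7Code.card = 367 := by
  rw [c7Code, card_toFinset_of_pairwise_circSeparated two_pos pairwise_map_c7Words,
    List.length_map, length_c7Words]

theorem isCircIndependent_c7Code : IsCircIndependent 2 (c7Code : Set (Fin 5 → ZMod 7)) := by
  rw [c7Code, List.coe_toFinset]
  exact isCircIndependent_of_pairwise_circSeparated pairwise_map_c7Words

end Construction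

/-- `α(C₇^{⊠5}) ≥ 367`: there is an independent set of cardinality 367 in the fifth
strong product power of the 7-cycle `C₇ = C_{2,7}`; consequently
`Θ(C₇) ≥ 367^{1/5}`. -/
theorem shannon_capacity_C7_lower_bound :
    (∃ S : Finset (Fin 5 → ZMod 7), S.card = 367 ∧
      ∀ u ∈ S, ∀ v ∈ S, u ≠ v → ∃ i : Fin 5, 2 ≤ circDist 7 (u i) (v i))
    ∧ (367 : ℝ) ^ ((5 : ℝ)⁻¹) ≤ circTheta 7 2 := by
  refine ⟨⟨c7Code, card_c7Code, fun u hu v hv huv ↦ isCircIndependent_c7Code hu hv huv⟩, ?_⟩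
  simpa [card_c7Code] using isCircIndependent_c7Code.card_rpow_inv_le_circTheta (by norm_num)
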